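/- Let ℓ be an odd prime, q = p^n a prime power, r = ℓ, k = (q^ℓ − 1)/(q − 1), and 0 ≤ a,b ≤ q−2. Define T_ℓ(a,b) = {x ∈ 𝔽_q : x^ℓ = ω^{ak} and (x+1)^ℓ = ω^{bk}} and let I_ℓ(a,b) be the set of monic irreducible polynomials f ∈ 𝔽_q[X] of degree ℓ with f(0) = −ω^{ak} and f(−1) = −ω^{bk}. Then (a,b)_{q−1} = #T_ℓ(a,b) + ℓ · #I_ℓ(a,b). -/

import Mathlib

/-- `x` lies in the cyclotomic coset `C_a = ω^a ⟨ω^e⟩` of `Fˣ`. -/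
def InCycCoset {F : Type*} [Field F] (ω : Fˣ) (e a : ℕ) (x : Fˣ) : Prop :=
  ∃ m : ℕ, x = ω ^ a * (ω ^ e) ^ m

/-- The cyclotomic number `(a,b)_e` : the number of `x ∈ C_a` with `x + 1 ∈ C_b`. -/
noncomputable def cycNum {F : Type*} [Field F] (ω : Fˣ) (e a b : ℕ) : ℕ :=
  Nat.card {x : Fˣ | InCycCoset ω e a x ∧ ∃ y : Fˣ, InCycCoset ω e b y ∧ (y : F) = (x : F) + 1}

open Polynomial in
theorem aux_norm_minpoly {K F : Type*} [Field K] [Field F] [Algebra K F] [FiniteDimensional K F]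
    {ℓ : ℕ} (hodd : Odd ℓ) (hfr : Module.finrank K F = ℓ) (x : F)
    (hx : (minpoly K x).natDegree = ℓ) : (minpoly K x).eval 0 = - Algebra.norm K x := by
  have hi : IsIntegral K x := IsIntegral.of_finite K x
  have h1 : Module.finrank K (IntermediateField.adjoin K {x}) = ℓ := by
    rw [IntermediateField.adjoin.finrank hi, hx]
  have h2 := Module.finrank_mul_finrank K (IntermediateField.adjoin K {x}) F
  have h3 : Module.finrank (IntermediateField.adjoin K {x}) F = 1 := by
    rw [h1, hfr] at h2
    exact Nat.eq_of_mul_eq_mul_left hodd.pos (by omega)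
  rw [Algebra.norm_eq_norm_adjoin K x, h3, pow_one,
    ← IntermediateField.adjoin.powerBasis_gen hi,
    Algebra.PowerBasis.norm_gen_eq_coeff_zero_minpoly, ← PowerBasis.finrank, h1,
    hodd.neg_one_pow, IntermediateField.adjoin.powerBasis_gen hi, IntermediateField.minpoly_gen,
    coeff_zero_eq_eval_zero]
  ring

open Polynomial in
theorem aux_norm_minpoly_one {K F : Type*} [Field K] [Field F] [Algebra K F]
    [FiniteDimensional K F]
    {ℓ : ℕ} (hodd : Odd ℓ) (hfr : Module.finrank K F = ℓ) (x : F)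
    (hx : (minpoly K x).natDegree = ℓ) :
    (minpoly K x).eval (-1) = - Algebra.norm K (x + 1) := by
  have h := minpoly.add_algebraMap (A := K) x 1
  rw [map_one] at h
  rw [← aux_norm_minpoly hodd hfr (x + 1), h]
  · simp [eval_comp]
  · rw [h, natDegree_comp, hx, natDegree_X_sub_C, mul_one]

theorem aux_coset {F : Type*} [Field F] [Fintype F] (ω : Fˣ)
    (hω : ∀ x : Fˣ, x ∈ Subgroup.zpowers ω) (e k a : ℕ) (hk : 0 < k)
    (hc : Fintype.card F - 1 = e * k) (x : Fˣ) :
    InCycCoset ω e a x ↔ x ^ k = ω ^ (a * k) := by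
  classical
  have hord : orderOf ω = e * k := by
    rw [orderOf_eq_card_of_forall_mem_zpowers hω, Nat.card_eq_fintype_card, Fintype.card_units, hc]
  constructor
  · rintro ⟨m, rfl⟩
    rw [mul_pow, ← pow_mul, ← pow_mul, ← pow_mul,
      show e * (m * k) = orderOf ω * m by rw [hord]; ring, pow_mul ω (orderOf ω), pow_orderOf_eq_one,
      one_pow, mul_one]
  · intro h
    obtain ⟨j, hj⟩ := (mem_powers_iff_mem_zpowers (x := ω)).2 (hω ((ω ^ a)⁻¹ * x))
    simp only at hj
    have h1 : ω ^ (j * k) = 1 := by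
      rw [pow_mul, hj, mul_pow, h, inv_pow, ← pow_mul]; simp
    have h2 := orderOf_dvd_of_pow_eq_one h1
    rw [hord] at h2
    obtain ⟨m, rfl⟩ := Nat.dvd_of_mul_dvd_mul_right hk h2
    exact ⟨m, by rw [← pow_mul, hj]; simp⟩

open Polynomial in
theorem aux_fiber {K F : Type*} [Field K] [Field F] [Fintype K] [Fintype F] [Algebra K F]
    [DecidableEq F] [DecidableEq K[X]]
    {ℓ : ℕ} (hF : Fintype.card F = Fintype.card K ^ ℓ) (hℓ : ℓ ≠ 0) (f : K[X]) (hm : f.Monic)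
    (hi : Irreducible f) (hd : f.natDegree = ℓ) :
    (Finset.univ.filter (fun x : F => minpoly K x = f)).card = ℓ := by
  have hdvd : f ∣ X ^ (Nat.card K) ^ ℓ - X :=
    hi.natDegree_dvd_iff_dvd_X_pow_card_pow_sub_X.1 (by rw [hd])
  have hsp : (f.map (algebraMap K F)).Splits := by
    refine Splits.of_dvd ?_ ?_ (map_dvd (algebraMap K F) hdvd)
    · rw [Nat.card_eq_fintype_card, ← hF, Polynomial.map_sub, Polynomial.map_pow, map_X]
      rw [splits_iff_card_roots, FiniteField.roots_X_pow_card_sub_X,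
        FiniteField.X_pow_card_sub_X_natDegree_eq _ Fintype.one_lt_card]
      rfl
    · exact (Polynomial.map_ne_zero_iff (algebraMap K F).injective).2 (FiniteField.X_pow_card_pow_sub_X_ne_zero _ hℓ Finite.one_lt_card)
  have := card_rootSet_eq_natDegree (K := F) (PerfectField.separable_of_irreducible hi) hsp
  rw [hd] at this
  rw [← this, ← Set.toFinset_card]
  congr 1
  ext x
  simp only [Finset.mem_filter, Finset.mem_univ, true_and, Set.mem_toFinset, mem_rootSet]
  constructor
  · rintro rfl
    exact ⟨hi.ne_zero, minpoly.aeval K x⟩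
  · rintro ⟨-, h⟩
    exact (minpoly.eq_of_irreducible_of_monic hi h hm).symm

/-- For an odd prime `ℓ`, `r = ℓ`, and `ζ = ω^k` viewed in `𝔽_q`, the cyclotomic number
decomposes as `(a,b)_{q-1} = #T_ℓ(a,b) + ℓ · #I_ℓ(a,b)`, where
`T_ℓ(a,b) = {x ∈ 𝔽_q : x^ℓ = ζ^a, (x+1)^ℓ = ζ^b}` and `I_ℓ(a,b)` is the set of monic
irreducible polynomials of degree `ℓ` over `𝔽_q` with `f(0) = -ζ^a` and `f(-1) = -ζ^b`. -/
theorem cycNum_odd_prime_decomposition {p n q ℓ k : ℕ} (hp : p.Prime) (hn : 1 ≤ n)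
    (hq : q = p ^ n) (hℓ : ℓ.Prime) (hodd : Odd ℓ) (hk : k = (q ^ ℓ - 1) / (q - 1))
    {K F : Type*} [Field K] [Field F] [Fintype K] [Fintype F] [Algebra K F]
    (hK : Fintype.card K = q) (hF : Fintype.card F = q ^ ℓ)
    (ω : Fˣ) (hω : ∀ x : Fˣ, x ∈ Subgroup.zpowers ω)
    (ζ : K) (hζ : algebraMap K F ζ = (ω : F) ^ k)
    (a b : ℕ) (ha : a ≤ q - 2) (hb : b ≤ q - 2) :
    cycNum ω (q - 1) a b =
      Nat.card {x : K | x ^ ℓ = ζ ^ a ∧ (x + 1) ^ ℓ = ζ ^ b} +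
        ℓ * Nat.card {f : Polynomial K | f.Monic ∧ Irreducible f ∧ f.natDegree = ℓ ∧
          f.eval 0 = -ζ ^ a ∧ f.eval (-1) = -ζ ^ b} := by
  classical
  subst hK
  have hq1 : 1 < Fintype.card K := Fintype.one_lt_card
  have hfr : Module.finrank K F = ℓ := by
    have h := Module.card_eq_pow_finrank (K := K) (V := F)
    rw [hF] at h
    exact (Nat.pow_right_injective hq1 h).symm
  have hck : Fintype.card F - 1 = (Fintype.card K - 1) * k := by
    rw [hF, hk]
    refine (Nat.mul_div_cancel' ?_).symm
    simpa using Nat.sub_dvd_pow_sub_pow (Fintype.card K) 1 ℓ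
  have hF1 : 1 < Fintype.card F := Fintype.one_lt_card
  have hkpos : 0 < k := by
    rcases Nat.eq_zero_or_pos k with h | h
    · rw [h] at hck; omega
    · exact h
  have hnorm : ∀ x : F, algebraMap K F (Algebra.norm K x) = x ^ k := by
    intro x
    rw [FiniteField.algebraMap_norm_eq_pow, Nat.card_eq_fintype_card, Nat.card_eq_fintype_card,
      hF, hk]
  have hζ0 : ζ ≠ 0 := by
    rintro rfl
    rw [map_zero] at hζ
    exact pow_ne_zero k ω.ne_zero hζ.symm
  have hcos : ∀ (c : ℕ) (x : Fˣ), InCycCoset ω (Fintype.card K - 1) c x ↔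
      Algebra.norm K (x : F) = ζ ^ c := by
    intro c x
    rw [aux_coset ω hω _ k c hkpos hck, ← (algebraMap K F).injective.eq_iff, hnorm, map_pow, hζ,
      ← Units.val_inj]
    push_cast
    rw [← pow_mul, mul_comm]
  have hne : ∀ (c : ℕ) (x : F), Algebra.norm K x = ζ ^ c → x ≠ 0 := by
    rintro c x h rfl
    rw [Algebra.norm_zero] at h
    exact pow_ne_zero c hζ0 h.symm
  set S : Finset F := Finset.univ.filter
    (fun x : F => Algebra.norm K x = ζ ^ a ∧ Algebra.norm K (x + 1) = ζ ^ b) with hS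
  set T : Finset K := Finset.univ.filter
    (fun x : K => x ^ ℓ = ζ ^ a ∧ (x + 1) ^ ℓ = ζ ^ b) with hT
  have hcyc : cycNum ω (Fintype.card K - 1) a b = S.card := by
    unfold cycNum
    rw [Nat.card_eq_fintype_card, ← Set.toFinset_card]
    refine Finset.card_bij (fun x _ => (x : F)) ?_ ?_ ?_
    · intro x hx
      simp only [Set.mem_toFinset, Set.mem_setOf_eq] at hx
      obtain ⟨h1, y, h2, h3⟩ := hx
      simp only [hS, Finset.mem_filter, Finset.mem_univ, true_and]
      exact ⟨(hcos a x).1 h1, by rw [← h3]; exact (hcos b y).1 h2⟩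
    · intro x _ y _ h
      exact Units.ext h
    · intro x hx
      simp only [hS, Finset.mem_filter, Finset.mem_univ, true_and] at hx
      refine ⟨Units.mk0 x (hne a x hx.1), ?_, rfl⟩
      simp only [Set.mem_toFinset, Set.mem_setOf_eq]
      exact ⟨(hcos a _).2 hx.1, Units.mk0 (x + 1) (hne b _ hx.2), (hcos b _).2 hx.2, rfl⟩
  have hTc : Nat.card {x : K | x ^ ℓ = ζ ^ a ∧ (x + 1) ^ ℓ = ζ ^ b} = T.card := by
    rw [Nat.card_eq_fintype_card, ← Set.toFinset_card]
    congr 1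
    ext x
    simp [hT]
  have hsplit := Finset.card_filter_add_card_filter_not (s := S) (fun x => x ∈ (algebraMap K F).range)
  have h1 : (S.filter (fun x => x ∈ (algebraMap K F).range)).card = T.card := by
    rw [← Finset.card_image_of_injective T (algebraMap K F).injective]
    congr 1
    ext x
    simp only [hS, hT, Finset.mem_filter, Finset.mem_univ, true_and, Finset.mem_image,
      RingHom.mem_range]
    constructor
    · rintro ⟨⟨h1, h2⟩, y, rfl⟩
      refine ⟨y, ⟨?_, ?_⟩, rfl⟩
      · rw [← h1, Algebra.norm_algebraMap, hfr]
      · rw [← h2, ← map_one (algebraMap K F), ← map_add, Algebra.norm_algebraMap, hfr]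
    · rintro ⟨y, ⟨h1, h2⟩, rfl⟩
      refine ⟨⟨?_, ?_⟩, y, rfl⟩
      · rw [← h1, Algebra.norm_algebraMap, hfr]
      · rw [← h2, ← map_one (algebraMap K F), ← map_add, Algebra.norm_algebraMap, hfr]
  set I : Finset (Polynomial K) :=
    (S.filter (fun x => x ∉ (algebraMap K F).range)).image (minpoly K) with hI
  have hdeg : ∀ x : F, x ∉ (algebraMap K F).range → (minpoly K x).natDegree = ℓ := by
    intro x hx
    have h := minpoly.degree_dvd (K := K) (IsIntegral.of_finite K x)
    rw [hfr] at h
    rcases (Nat.dvd_prime hℓ).1 h with h | h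
    · exact absurd (minpoly.natDegree_eq_one_iff.1 h) hx
    · exact h
  have hdeg' : ∀ x : F, (minpoly K x).natDegree = ℓ → x ∉ (algebraMap K F).range := by
    intro x hx h
    have := minpoly.natDegree_eq_one_iff.2 h
    exact hℓ.one_lt.ne' (hx.symm.trans this)
  have hmem : ∀ x : F, (minpoly K x).natDegree = ℓ → (x ∈ S ↔
      (minpoly K x).eval 0 = -ζ ^ a ∧ (minpoly K x).eval (-1) = -ζ ^ b) := by
    intro x hx
    rw [aux_norm_minpoly hodd hfr x hx, aux_norm_minpoly_one hodd hfr x hx, neg_inj, neg_inj]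
    simp [hS]
  have hIset : {f : Polynomial K | f.Monic ∧ Irreducible f ∧ f.natDegree = ℓ ∧
      f.eval 0 = -ζ ^ a ∧ f.eval (-1) = -ζ ^ b} = (I : Set (Polynomial K)) := by
    ext f
    simp only [hI, Set.mem_setOf_eq, Finset.coe_image, Set.mem_image, Finset.mem_coe,
      Finset.mem_filter]
    constructor
    · rintro ⟨hm, hi, hd, h0, h1⟩
      have hc := aux_fiber (K := K) (F := F) hF hℓ.ne_zero f hm hi hd
      have hpos : 0 < (Finset.univ.filter (fun x : F => minpoly K x = f)).card := by
        rw [hc]; exact hℓ.pos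
      obtain ⟨x, hx⟩ := Finset.card_pos.1 hpos
      have hx : minpoly K x = f := by simpa using hx
      subst hx
      exact ⟨x, ⟨(hmem x hd).2 ⟨h0, h1⟩, hdeg' x hd⟩, rfl⟩
    · rintro ⟨x, ⟨hx, hxr⟩, rfl⟩
      have hint : IsIntegral K x := IsIntegral.of_finite K x
      exact ⟨minpoly.monic hint, minpoly.irreducible hint, hdeg x hxr,
        (hmem x (hdeg x hxr)).1 hx⟩
  have h2 : (S.filter (fun x => x ∉ (algebraMap K F).range)).card = ℓ * I.card := by
    rw [Finset.card_eq_sum_card_fiberwise (f := minpoly K) (t := I)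
      (fun x hx => Finset.mem_image_of_mem _ hx), mul_comm]
    refine Finset.sum_const_nat ?_
    intro f hf
    have hf' : f ∈ (I : Set (Polynomial K)) := hf
    rw [← hIset] at hf'
    obtain ⟨hm, hi, hd, h0, h1⟩ := hf'
    rw [← aux_fiber (K := K) (F := F) hF hℓ.ne_zero f hm hi hd]
    congr 1
    ext x
    simp only [Finset.mem_filter, Finset.mem_univ, true_and]
    constructor
    · rintro ⟨-, h⟩
      exact h
    · rintro rfl
      exact ⟨⟨(hmem x hd).2 ⟨h0, h1⟩, hdeg' x hd⟩, rfl⟩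
  have hIc : Nat.card {f : Polynomial K | f.Monic ∧ Irreducible f ∧ f.natDegree = ℓ ∧
      f.eval 0 = -ζ ^ a ∧ f.eval (-1) = -ζ ^ b} = I.card := by
    rw [hIset]
    simp
  rw [hcyc, hTc, hIc, ← hsplit, h1, h2]
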